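/- The Riemann Hypothesis holds if and only if for every ε > 0 one has det(C_n) = O(n^{1/2+ε}) as n → ∞. -/

import Mathlib

/-- The `n × n` Redheffer matrix: its `(i,j)` entry (with `1 ≤ i, j ≤ n`, realized via
`Fin n` shifted by one) is `1` if `j = 1` or `i ∣ j`, and `0` otherwise. -/
def Cmat (n : ℕ) : Matrix (Fin n) (Fin n) ℤ :=
  fun i j => if j.val = 0 ∨ (i.val + 1) ∣ (j.val + 1) then 1 else 0

/-!
Adding to the first row of `C_n` the combination of the other rows with Möbius coefficients leaves
only the entry `M(n) = ∑_{k ≤ n} μ(k)` in that row and an upper unitriangular minor, so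
`det C_n = M(n)`. By the functional equation, the Riemann Hypothesis says that `ζ` has no zeros in
the half-plane `Re s > 1 / 2`.

If `M(t) = O(t ^ r)`, partial summation gives `1 / ζ(s) = s ∫₁^∞ M(t) t^{-s-1} dt`, and the right
side is holomorphic for `Re s > r`. Conversely, if `ζ` has no zeros for `Re s > σ₀`, then
Borel–Carathéodory and the three circles theorem, applied to a branch of `log ζ` on discs centred
on `Re s = 2`, give `1 / ζ(s) = O(|Im s| ^ ε)` for `Re s ≥ σ₀ + δ`. Perron's formula for `M(n)`,
with a smoothed kernel that makes all integrals absolutely convergent, then yields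
`M(n) = O(n ^ (σ₀ + ε))` after moving the contour to `Re s = σ₀ + δ`.
-/

section Redheffer

open ArithmeticFunction Finset

/-- The Mertens function `M(n) = ∑_{k ≤ n} μ(k)`, the summatory function of the Möbius function. -/
def mertens (n : ℕ) : ℤ := ∑ k ∈ Icc 1 n, moebius k

lemma sum_fin_succ_eq_sum_Icc {M : Type*} [AddCommMonoid M] (f : ℕ → M) (n : ℕ) :
    ∑ i : Fin n, f (i + 1) = ∑ k ∈ Icc 1 n, f k := by
  rw [Fin.sum_univ_eq_sum_range (fun i ↦ f (i + 1)), range_eq_Ico, sum_Ico_add' f 0 n 1]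
  rfl

lemma sum_Icc_moebius_of_dvd {m n : ℕ} (hm : m ≠ 0) (hmn : m ≤ n) :
    ∑ k ∈ Icc 1 n with k ∣ m, moebius k = if m = 1 then 1 else 0 := by
  have hdiv : {k ∈ Icc 1 n | k ∣ m} = m.divisors := by
    ext k
    simp only [mem_filter, mem_Icc, Nat.mem_divisors]
    exact ⟨fun h ↦ ⟨h.2, hm⟩, fun h ↦
      ⟨⟨Nat.pos_of_dvd_of_pos h.1 (Nat.pos_of_ne_zero hm),
        (Nat.le_of_dvd (Nat.pos_of_ne_zero hm) h.1).trans hmn⟩, h.1⟩⟩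
  rw [hdiv, ← coe_mul_zeta_apply, moebius_mul_coe_zeta, one_apply]

lemma sum_moebius_smul_Cmat_row (n : ℕ) :
    ∑ i : Fin (n + 1), moebius (i + 1) • Cmat (n + 1) i = Pi.single 0 (mertens (n + 1)) := by
  ext j
  simp only [Finset.sum_apply, Pi.smul_apply, smul_eq_mul, Cmat, mul_ite, mul_one, mul_zero]
  obtain rfl | hj := eq_or_ne j 0
  · simp [sum_fin_succ_eq_sum_Icc (fun k ↦ moebius k), mertens]
  · have hj' : (j : ℕ) ≠ 0 := Fin.val_ne_zero_iff.2 hj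
    simp only [hj', false_or, Pi.single_eq_of_ne hj]
    rw [sum_fin_succ_eq_sum_Icc (fun k ↦ if k ∣ (j : ℕ) + 1 then moebius k else 0), ← sum_filter,
      sum_Icc_moebius_of_dvd (Nat.succ_ne_zero _) (by lia), if_neg (by simpa using hj')]

lemma det_submatrix_succ_Cmat (n : ℕ) :
    ((Cmat (n + 1)).submatrix Fin.succ Fin.succ).det = 1 := by
  rw [Matrix.det_of_isUpperTriangular]
  · exact prod_eq_one fun i _ ↦ by simp [Cmat]
  · intro i j hji
    have hlt : (j : ℕ) < i := hji
    have hdvd : ¬ (i : ℕ) + 1 + 1 ∣ j + 1 + 1 := fun h ↦ by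
      have := Nat.le_of_dvd (Nat.succ_pos _) h
      lia
    simp [Cmat, hdvd]

lemma det_Cmat_succ (n : ℕ) : (Cmat (n + 1)).det = mertens (n + 1) := by
  have hrow := Matrix.det_updateRow_sum (Cmat (n + 1)) 0 (fun i ↦ moebius (i + 1))
  rw [sum_moebius_smul_Cmat_row, Fin.val_zero, zero_add, moebius_apply_one, one_smul] at hrow
  rw [← hrow, Matrix.det_succ_row_zero, sum_eq_single 0]
  · simp only [Matrix.updateRow_self, Pi.single_eq_same, Fin.val_zero, pow_zero, one_mul,
      Fin.succAbove_zero]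
    rw [← Fin.succAbove_zero, Matrix.submatrix_updateRow_succAbove, Fin.succAbove_zero,
      det_submatrix_succ_Cmat, mul_one]
  · intro j _ hj
    simp [hj]
  · simp

end Redheffer

section HalfPlane

open Complex Filter MeasureTheory Set Topology Asymptotics

/-- The integral `∫₁^∞ g(t) t^{-s-1} dt`: by partial summation, a Dirichlet series is `s` times this
transform of the summatory function of its coefficients. -/
noncomputable def tailMellin (g : ℝ → ℂ) (s : ℂ) : ℂ :=
  ∫ t in Ioi (1 : ℝ), g t * (t : ℂ) ^ (-(s + 1))

variable {g : ℝ → ℂ} {C r : ℝ} {s : ℂ}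

lemma tailMellin_eq_mellin_indicator (g : ℝ → ℂ) (s : ℂ) :
    tailMellin g s = mellin ((Ioi 1).indicator g) (-s) := by
  have hmul (t : ℝ) : (t : ℂ) ^ (-s - 1) • (Ioi (1 : ℝ)).indicator g t
      = (Ioi (1 : ℝ)).indicator (fun t : ℝ ↦ g t * (t : ℂ) ^ (-(s + 1))) t := by
    by_cases h : t ∈ Ioi (1 : ℝ)
    · rw [indicator_of_mem h, indicator_of_mem h, smul_eq_mul, mul_comm, neg_add']
    · rw [indicator_of_notMem h, indicator_of_notMem h, smul_zero]
  simp_rw [tailMellin, mellin, hmul]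
  rw [setIntegral_indicator measurableSet_Ioi,
    inter_eq_self_of_subset_right (Ioi_subset_Ioi zero_le_one)]

lemma locallyIntegrableOn_indicator_Ioi_one (hg : Measurable g)
    (hb : ∀ t : ℝ, 1 < t → ‖g t‖ ≤ C * t ^ r) :
    LocallyIntegrableOn ((Ioi (1 : ℝ)).indicator g) (Ioi 0) := by
  have hdom : LocallyIntegrableOn (fun t : ℝ ↦ C * |t| ^ r) (Ioi 0) :=
    ContinuousOn.locallyIntegrableOn (continuousOn_const.mul <|
      continuous_abs.continuousOn.rpow_const fun t ht ↦ Or.inl (abs_ne_zero.2 ht.ne'))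
      measurableSet_Ioi
  refine hdom.mono (hg.indicator measurableSet_Ioi).aestronglyMeasurable (.of_forall fun t ↦ ?_)
  by_cases h : t ∈ Ioi (1 : ℝ)
  · rw [indicator_of_mem h, abs_of_pos (zero_lt_one.trans h)]
    exact (hb t h).trans (le_abs_self _)
  · rw [indicator_of_notMem h, norm_zero]
    exact norm_nonneg _

lemma differentiableAt_tailMellin (hg : Measurable g)
    (hb : ∀ t : ℝ, 1 < t → ‖g t‖ ≤ C * t ^ r) (hs : r < s.re) :
    DifferentiableAt ℂ (tailMellin g) s := by
  have htop : (Ioi (1 : ℝ)).indicator g =O[atTop] fun t ↦ t ^ (-(-r)) := by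
    refine .of_bound C ?_
    filter_upwards [eventually_gt_atTop (1 : ℝ)] with t ht
    rw [indicator_of_mem (mem_Ioi.2 ht), neg_neg, Real.norm_of_nonneg (by positivity)]
    exact hb t ht
  have hbot : (Ioi (1 : ℝ)).indicator g =O[𝓝[>] 0] fun t ↦ t ^ (-((-s).re - 1)) := by
    have hzero : (Ioi (1 : ℝ)).indicator g =ᶠ[𝓝[>] 0] 0 := by
      filter_upwards [mem_nhdsWithin_of_mem_nhds (Iio_mem_nhds zero_lt_one)] with t ht
      exact indicator_of_notMem (notMem_Ioi.2 ht.le) g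
    exact hzero.trans_isBigO (isBigO_zero _ _)
  have hdiff := mellin_differentiableAt_of_isBigO_rpow
    (locallyIntegrableOn_indicator_Ioi_one hg hb) htop (by simpa using hs) hbot (sub_one_lt _)
  rw [funext (tailMellin_eq_mellin_indicator g)]
  exact hdiff.comp s differentiableAt_id.neg

lemma norm_mul_cpow_le_mul_rpow (hb : ∀ t : ℝ, 1 < t → ‖g t‖ ≤ C * t ^ r) {t : ℝ} (ht : 1 < t) :
    ‖g t * (t : ℂ) ^ (-(s + 1))‖ ≤ C * t ^ (r - s.re - 1) := by
  have ht0 : 0 < t := zero_lt_one.trans ht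
  rw [norm_mul, norm_cpow_eq_rpow_re_of_pos ht0, neg_re, add_re, one_re,
    show r - s.re - 1 = r + -(s.re + 1) by ring, Real.rpow_add ht0, ← mul_assoc]
  gcongr
  exact hb t ht

lemma integrableOn_tailMellin (hg : Measurable g)
    (hb : ∀ t : ℝ, 1 < t → ‖g t‖ ≤ C * t ^ r) (hs : r < s.re) :
    IntegrableOn (fun t : ℝ ↦ g t * (t : ℂ) ^ (-(s + 1))) (Ioi 1) := by
  have hdom : IntegrableOn (fun t : ℝ ↦ C * t ^ (r - s.re - 1)) (Ioi 1) :=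
    (integrableOn_Ioi_rpow_of_lt (by linarith) zero_lt_one).const_mul C
  refine hdom.mono' (by fun_prop) ?_
  filter_upwards [ae_restrict_mem measurableSet_Ioi] with t ht
  exact norm_mul_cpow_le_mul_rpow hb ht

lemma norm_tailMellin_le (hb : ∀ t : ℝ, 1 < t → ‖g t‖ ≤ C * t ^ r) (hs : r < s.re) :
    ‖tailMellin g s‖ ≤ C / (s.re - r) := by
  have hexp : r - s.re - 1 < -1 := by linarith
  calc ‖tailMellin g s‖ ≤ ∫ t in Ioi (1 : ℝ), C * t ^ (r - s.re - 1) := by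
        refine norm_integral_le_of_norm_le
          ((integrableOn_Ioi_rpow_of_lt hexp zero_lt_one).const_mul C) ?_
        filter_upwards [ae_restrict_mem measurableSet_Ioi] with t ht
        exact norm_mul_cpow_le_mul_rpow hb ht
    _ = C / (s.re - r) := by
        rw [integral_const_mul, integral_Ioi_rpow_of_lt hexp zero_lt_one, Real.one_rpow,
          sub_add_cancel, ← neg_sub s.re r, neg_div_neg_eq, mul_one_div]

lemma eq_of_eq_of_lt_re {E : Type*} [NormedAddCommGroup E] [NormedSpace ℂ E] [CompleteSpace E]
    {f g : ℂ → E} {a b : ℝ}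
    (hf : ∀ s : ℂ, a < s.re → DifferentiableAt ℂ f s)
    (hg : ∀ s : ℂ, a < s.re → DifferentiableAt ℂ g s)
    (hfg : ∀ s : ℂ, b < s.re → f s = g s) {s : ℂ} (hs : a < s.re) : f s = g s := by
  have hopen (c : ℝ) : IsOpen {s : ℂ | c < s.re} := isOpen_lt continuous_const continuous_re
  have hanalytic {h : ℂ → E} (hh : ∀ s : ℂ, a < s.re → DifferentiableAt ℂ h s) :
      AnalyticOnNhd ℂ h {s | a < s.re} :=
    DifferentiableOn.analyticOnNhd (fun s hs ↦ (hh s hs).differentiableWithinAt) (hopen a)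
  have hbase (c : ℝ) (hc : c ≤ max a b) : c < (((max a b + 1 : ℝ) : ℂ)).re := by
    rw [ofReal_re]
    linarith
  refine (hanalytic hf).eqOn_of_preconnected_of_eventuallyEq (hanalytic hg)
    (convex_halfSpace_re_gt a).isPreconnected (hbase a (le_max_left a b)) ?_ hs
  filter_upwards [(hopen b).mem_nhds (hbase b (le_max_right a b))] using hfg

end HalfPlane

section Zeta

open Complex Filter MeasureTheory Set Topology Asymptotics

variable {s : ℂ} {σ r : ℝ}

lemma riemannZeta₁_eq_sub_one_mul (hs : s ≠ 1) : riemannZeta₁ s = (s - 1) * riemannZeta s := by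
  rw [riemannZeta_eq_inv_sub_mul hs, mul_inv_cancel_left₀ (sub_ne_zero.2 hs)]

lemma riemannZeta₁_eq_zero_iff : riemannZeta₁ s = 0 ↔ riemannZeta s = 0 := by
  obtain rfl | hs := eq_or_ne s 1
  · simp [riemannZeta_one_ne_zero]
  · simp [riemannZeta₁_eq_sub_one_mul hs, sub_ne_zero.2 hs]

lemma ne_one_of_one_lt_re (hs : 1 < s.re) : s ≠ 1 := by
  rintro rfl
  exact hs.ne' one_re

lemma tailMellin_ofReal (hs : 1 < s.re) : tailMellin (fun t ↦ (t : ℂ)) s = 1 / (s - 1) := by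
  have hcongr : tailMellin (fun t ↦ (t : ℂ)) s = ∫ t in Ioi (1 : ℝ), (t : ℂ) ^ (-s) := by
    refine setIntegral_congr_fun measurableSet_Ioi fun t ht ↦ ?_
    have ht0 : (t : ℂ) ≠ 0 := ofReal_ne_zero.2 (zero_lt_one.trans ht).ne'
    dsimp only
    rw [neg_add', cpow_sub _ _ ht0, cpow_one, mul_div_cancel₀ _ ht0]
  rw [hcongr, integral_Ioi_cpow_of_lt (by simpa using hs) zero_lt_one, ofReal_one, one_cpow,
    neg_add_eq_sub, ← neg_sub s 1, neg_div_neg_eq]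

lemma norm_fract_le (t : ℝ) : ‖((Int.fract t : ℝ) : ℂ)‖ ≤ 1 * t ^ (0 : ℝ) := by
  simpa [abs_of_nonneg (Int.fract_nonneg t)] using (Int.fract_lt_one t).le

lemma measurable_ofReal_fract : Measurable fun t : ℝ ↦ ((Int.fract t : ℝ) : ℂ) :=
  measurable_ofReal.comp measurable_fract

lemma tailMellin_floor (hs : 1 < s.re) :
    tailMellin (fun t ↦ (⌊t⌋₊ : ℂ)) s
      = 1 / (s - 1) - tailMellin (fun t ↦ ((Int.fract t : ℝ) : ℂ)) s := by
  have hid : IntegrableOn (fun t : ℝ ↦ (t : ℂ) * (t : ℂ) ^ (-(s + 1))) (Ioi 1) :=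
    integrableOn_tailMellin (C := 1) (r := 1) measurable_ofReal
      (fun t ht ↦ by simp [abs_of_pos (zero_lt_one.trans ht)]) hs
  rw [← tailMellin_ofReal hs, tailMellin, tailMellin, tailMellin, ← integral_sub hid
    (integrableOn_tailMellin measurable_ofReal_fract (fun t _ ↦ norm_fract_le t)
      (zero_lt_one.trans hs))]
  refine setIntegral_congr_fun measurableSet_Ioi fun t ht ↦ ?_
  have hfloor : (⌊t⌋₊ : ℂ) = t - (Int.fract t : ℝ) := by
    have : (⌊t⌋₊ : ℝ) = t - Int.fract t := by
      rw [natCast_floor_eq_intCast_floor (zero_lt_one.trans ht).le, Int.self_sub_fract]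
    exact_mod_cast this
  rw [hfloor, sub_mul]

lemma riemannZeta_eq_mul_tailMellin_floor (hs : 1 < s.re) :
    riemannZeta s = s * tailMellin (fun t ↦ (⌊t⌋₊ : ℂ)) s := by
  have hO : (fun n : ℕ ↦ ∑ _k ∈ Finset.Icc 1 n, (1 : ℂ)) =O[atTop] fun n ↦ (n : ℝ) ^ (1 : ℝ) :=
    .of_bound 1 (.of_forall fun n ↦ by simp)
  have h := LSeries_eq_mul_integral 1 zero_le_one hs (LSeriesSummable_one_iff.2 hs) hO
  rw [LSeries_one_eq_riemannZeta hs] at h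
  simpa [tailMellin] using h

lemma riemannZeta₁_eq_tailMellin (hs : 0 < s.re) :
    riemannZeta₁ s = s - (s - 1) * s * tailMellin (fun t ↦ ((Int.fract t : ℝ) : ℂ)) s := by
  refine eq_of_eq_of_lt_re (b := 1) (g := fun s ↦ s - (s - 1) * s * tailMellin _ s)
    (fun s _ ↦ differentiable_riemannZeta₁ s) (fun s hs ↦ ?_) (fun s hs ↦ ?_) hs
  · have := differentiableAt_tailMellin measurable_ofReal_fract (fun t _ ↦ norm_fract_le t) hs
    fun_prop
  · have hs1 : s - 1 ≠ 0 := sub_ne_zero.2 (ne_one_of_one_lt_re hs)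
    rw [riemannZeta₁_eq_sub_one_mul (ne_one_of_one_lt_re hs),
      riemannZeta_eq_mul_tailMellin_floor hs, tailMellin_floor hs]
    field_simp

lemma norm_riemannZeta_le (hσ : 0 < σ) (hs : σ ≤ s.re) (h1 : 1 ≤ ‖s - 1‖) :
    ‖riemannZeta s‖ ≤ (1 + 1 / σ) * ‖s‖ := by
  have hs0 : 0 < s.re := hσ.trans_le hs
  have hne : s - 1 ≠ 0 := norm_pos_iff.1 (zero_lt_one.trans_le h1)
  have htail := norm_tailMellin_le (fun t _ ↦ norm_fract_le t) hs0
  rw [sub_zero] at htail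
  rw [riemannZeta_eq_inv_sub_mul (sub_ne_zero.1 hne), riemannZeta₁_eq_tailMellin hs0, mul_sub,
    mul_assoc (s - 1), inv_mul_cancel_left₀ hne]
  calc _ ≤ ‖s - 1‖⁻¹ * ‖s‖ + ‖s‖ * ‖tailMellin (fun t ↦ ((Int.fract t : ℝ) : ℂ)) s‖ := by
        simpa only [norm_mul, norm_inv] using norm_sub_le ((s - 1)⁻¹ * s) (s * tailMellin _ s)
    _ ≤ 1 * ‖s‖ + ‖s‖ * (1 / σ) := by
        gcongr
        · exact inv_le_one_of_one_le₀ h1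
        · exact htail.trans (one_div_le_one_div_of_le hσ hs)
    _ = _ := by ring

lemma riemannZeta_one_sub_eq_zero (h : riemannZeta s = 0) (htriv : ¬∃ n : ℕ, s = -2 * (n + 1)) :
    riemannZeta (1 - s) = 0 := by
  have hs0 : s ≠ 0 := by
    rintro rfl
    norm_num [riemannZeta_zero] at h
  have hs1 : 1 - s ≠ 0 := by
    intro hs
    rw [← sub_eq_zero.1 hs] at h
    exact riemannZeta_one_ne_zero h
  have hGamma : Gammaℝ s ≠ 0 := by
    rw [Ne, Gammaℝ_eq_zero_iff]
    rintro ⟨n, hn⟩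
    obtain _ | n := n
    · exact hs0 (by simpa using hn)
    · exact htriv ⟨n, by rw [hn]; push_cast; ring⟩
  rw [riemannZeta_def_of_ne_zero hs0, div_eq_zero_iff, or_iff_left hGamma] at h
  rw [riemannZeta_def_of_ne_zero hs1, completedRiemannZeta_one_sub, h, zero_div]

lemma riemannHypothesis_iff_riemannZeta_ne_zero :
    RiemannHypothesis ↔ ∀ s : ℂ, 1 / 2 < s.re → riemannZeta s ≠ 0 := by
  constructor
  · intro hRH s hs h0
    have hs1 : s ≠ 1 := by
      rintro rfl
      exact riemannZeta_one_ne_zero h0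
    refine hs.ne' (hRH s h0 ?_ hs1)
    rintro ⟨n, rfl⟩
    simp only [mul_re, neg_re, re_ofNat, add_re, natCast_re, one_re, neg_im, im_ofNat] at hs
    norm_num at hs
    linarith [n.cast_nonneg (α := ℝ)]
  · intro hfree s h0 htriv _
    have hle : s.re ≤ 1 / 2 := not_lt.1 fun h ↦ hfree s h h0
    have hge : (1 - s).re ≤ 1 / 2 :=
      not_lt.1 fun h ↦ hfree _ h (riemannZeta_one_sub_eq_zero h0 htriv)
    rw [sub_re, one_re] at hge
    linarith

lemma exists_norm_le_mul_rpow_of_isBigO {f : ℕ → ℂ}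
    (hO : f =O[atTop] fun n : ℕ ↦ (n : ℝ) ^ r) (hr : 0 ≤ r) :
    ∃ C, ∀ t : ℝ, 1 < t → ‖f ⌊t⌋₊‖ ≤ C * t ^ r := by
  obtain ⟨C, hC, hbound⟩ := bound_of_isBigO_nat_atTop hO
  refine ⟨C, fun t ht ↦ ?_⟩
  have hfloor : (0 : ℝ) < ⌊t⌋₊ := by exact_mod_cast (Nat.floor_pos.2 ht.le)
  calc ‖f ⌊t⌋₊‖ ≤ C * ‖(⌊t⌋₊ : ℝ) ^ r‖ := hbound (Real.rpow_pos_of_pos hfloor r).ne'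
    _ = C * (⌊t⌋₊ : ℝ) ^ r := by rw [Real.norm_of_nonneg (by positivity)]
    _ ≤ C * t ^ r := by
        gcongr
        exact Nat.floor_le (zero_le_one.trans ht.le)

lemma riemannZeta_ne_zero_of_mertens_isBigO (hr : 0 ≤ r)
    (hO : (fun n ↦ (mertens n : ℂ)) =O[atTop] fun n : ℕ ↦ (n : ℝ) ^ r) (hs : r < s.re) :
    riemannZeta s ≠ 0 := by
  obtain ⟨C, hC⟩ := exists_norm_le_mul_rpow_of_isBigO hO hr
  have hmeas : Measurable fun t : ℝ ↦ (mertens ⌊t⌋₊ : ℂ) :=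
    (measurable_from_nat (f := fun n ↦ (mertens n : ℂ))).comp Nat.measurable_floor
  have hkey : riemannZeta₁ s * (s * tailMellin (fun t ↦ (mertens ⌊t⌋₊ : ℂ)) s) = s - 1 := by
    refine eq_of_eq_of_lt_re (b := max 1 r)
      (f := fun s ↦ riemannZeta₁ s * (s * tailMellin _ s)) (g := fun s ↦ s - 1)
      (fun s hs ↦ ?_) (fun s _ ↦ by fun_prop) ?_ hs
    · have := differentiableAt_tailMellin hmeas hC hs
      fun_prop
    · intro s hs
      obtain ⟨hs1, hsr⟩ := max_lt_iff.1 hs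
      have hL := LSeries_eq_mul_integral (fun n ↦ (ArithmeticFunction.moebius n : ℂ)) hr hsr
        (ArithmeticFunction.LSeriesSummable_moebius_iff.2 hs1) (by simpa [mertens] using hO)
      have hL' : s * tailMellin (fun t ↦ (mertens ⌊t⌋₊ : ℂ)) s
          = LSeries (fun n ↦ (ArithmeticFunction.moebius n : ℂ)) s := by
        simpa [mertens, tailMellin] using hL.symm
      rw [hL', riemannZeta₁_eq_sub_one_mul (ne_one_of_one_lt_re hs1), mul_assoc,
        ← ArithmeticFunction.LSeries_zeta_eq_riemannZeta hs1,
        ArithmeticFunction.LSeries_zeta_mul_Lseries_moebius hs1, mul_one]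
  intro h0
  have h1 : riemannZeta₁ s = 0 := riemannZeta₁_eq_zero_iff.2 h0
  rw [h1, zero_mul, eq_comm, sub_eq_zero] at hkey
  rw [hkey] at h0
  exact riemannZeta_one_ne_zero h0

end Zeta

section ComplexAnalysis

open Complex Filter Metric Set Topology

lemma exists_differentiableOn_log {U : Set ℂ} (hU : IsOpen U) (hUs : IsSimplyConnected U)
    {F : ℂ → ℂ} (hF : DifferentiableOn ℂ F U) (h0 : ∀ z ∈ U, F z ≠ 0) {c : ℂ} (hc : c ∈ U) :
    ∃ f : ℂ → ℂ, DifferentiableOn ℂ f U ∧ f c = log (F c) ∧ ∀ z ∈ U, exp (f z) = F z := by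
  obtain ⟨g, hgcont, hg⟩ := exists_continuousOn_eqOn_exp_comp hUs hU hF.continuousOn
    (by rintro ⟨z, hz, hFz⟩; exact h0 z hz hFz)
  have hgdiff : DifferentiableOn ℂ g U := fun z hz ↦
    (HasDerivAt.of_comp_left (hgcont.continuousAt (hU.mem_nhds hz)) (hasDerivAt_exp (g z))
      (hF.differentiableAt (hU.mem_nhds hz)).hasDerivAt (exp_ne_zero _)
      (hg.eventuallyEq_of_mem (hU.mem_nhds hz))).differentiableAt.differentiableWithinAt
  refine ⟨fun z ↦ g z + (log (F c) - g c), hgdiff.add_const _, add_sub_cancel _ _, fun z hz ↦ ?_⟩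
  have hperiod : exp (log (F c) - g c) = 1 := by
    have hgc : exp (g c) = F c := hg hc
    rw [exp_sub, exp_log (h0 c hc), hgc, div_self (h0 c hc)]
  rw [exp_add, hperiod, mul_one]
  exact hg hz

-- The three lines theorem for `f ∘ exp`.
lemma norm_le_interp_of_mem_annulus {E : Type*} [NormedAddCommGroup E] [NormedSpace ℂ E]
    {f : ℂ → E} {r₁ r₂ a b : ℝ} (hr₁ : 0 < r₁) (hr : r₁ < r₂)
    (hd : DifferentiableOn ℂ f {z | ‖z‖ ∈ Ioo r₁ r₂}) (hc : ContinuousOn f {z | ‖z‖ ∈ Icc r₁ r₂})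
    (ha : ∀ z, ‖z‖ = r₁ → ‖f z‖ ≤ a) (hb : ∀ z, ‖z‖ = r₂ → ‖f z‖ ≤ b)
    {z : ℂ} (hz : ‖z‖ ∈ Icc r₁ r₂) :
    ‖f z‖ ≤ a ^ (1 - Real.log (‖z‖ / r₁) / Real.log (r₂ / r₁))
      * b ^ (Real.log (‖z‖ / r₁) / Real.log (r₂ / r₁)) := by
  have hr₂ : 0 < r₂ := hr₁.trans hr
  have hz0 : 0 < ‖z‖ := hr₁.trans_le hz.1
  have hexpIoo : MapsTo exp (re ⁻¹' Ioo (Real.log r₁) (Real.log r₂)) {z | ‖z‖ ∈ Ioo r₁ r₂} :=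
    fun w hw ↦ by
      simpa only [mem_preimage, mem_ofPred_eq, norm_exp, mem_Ioo, Real.log_lt_iff_lt_exp hr₁,
        Real.lt_log_iff_exp_lt hr₂] using hw
  have hexpIcc : MapsTo exp (re ⁻¹' Icc (Real.log r₁) (Real.log r₂)) {z | ‖z‖ ∈ Icc r₁ r₂} :=
    fun w hw ↦ by
      simpa only [mem_preimage, mem_ofPred_eq, norm_exp, mem_Icc, Real.log_le_iff_le_exp hr₁,
        Real.le_log_iff_exp_le hr₂] using hw
  have hlog : Real.log r₁ < Real.log r₂ := Real.log_lt_log hr₁ hr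
  have hlogz : log z ∈ HadamardThreeLines.verticalClosedStrip (Real.log r₁) (Real.log r₂) := by
    rw [HadamardThreeLines.verticalClosedStrip, mem_preimage, log_re]
    exact ⟨Real.log_le_log hr₁ hz.1, Real.log_le_log hz0 hz.2⟩
  have hdiff : DiffContOnCl ℂ (f ∘ exp)
      (HadamardThreeLines.verticalStrip (Real.log r₁) (Real.log r₂)) := by
    refine ⟨hd.comp differentiable_exp.differentiableOn hexpIoo, ?_⟩
    rw [HadamardThreeLines.verticalStrip, closure_preimage_re, closure_Ioo hlog.ne]
    exact hc.comp continuous_exp.continuousOn hexpIcc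
  have hcompact : IsCompact {z : ℂ | ‖z‖ ∈ Icc r₁ r₂} :=
    (isCompact_closedBall (0 : ℂ) r₂).of_isClosed_subset (isClosed_Icc.preimage continuous_norm)
      fun w hw ↦ mem_closedBall_zero_iff.2 hw.2
  have hbdd : BddAbove ((norm ∘ f ∘ exp) ''
      HadamardThreeLines.verticalClosedStrip (Real.log r₁) (Real.log r₂)) := by
    refine (hcompact.image_of_continuousOn hc.norm).bddAbove.mono ?_
    rintro _ ⟨w, hw, rfl⟩
    exact ⟨exp w, hexpIcc hw, rfl⟩
  have h := HadamardThreeLines.norm_le_interp_of_mem_verticalClosedStrip' hlog hlogz hdiff hbdd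
    (fun w hw ↦ ha _ (by rw [norm_exp, hw, Real.exp_log hr₁]))
    (fun w hw ↦ hb _ (by rw [norm_exp, hw, Real.exp_log hr₂]))
  rwa [Function.comp_apply, exp_log (norm_pos_iff.1 hz0), log_re,
    ← Real.log_div hz0.ne' hr₁.ne', ← Real.log_div hr₂.ne' hr₁.ne'] at h

lemma norm_le_mul_of_re_le {f : ℂ → ℂ} {R ρ M : ℝ} (hρR : ρ < R) (hM : 0 < M)
    (hf : DifferentiableOn ℂ f (ball 0 R)) (h0 : ‖f 0‖ ≤ M) (hre : ∀ z ∈ ball 0 R, (f z).re ≤ M)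
    {z : ℂ} (hz : ‖z‖ ≤ ρ) : ‖f z‖ ≤ 4 * R / (R - ρ) * M := by
  have : 0 < R - ρ := sub_pos.2 hρR
  have hzR : ‖z‖ < R := hz.trans_lt hρR
  have hR : 0 < R := (norm_nonneg z).trans_lt hzR
  calc ‖f z‖ ≤ 2 * M * ‖z‖ / (R - ‖z‖) + ‖f 0‖ * (R + ‖z‖) / (R - ‖z‖) :=
        borelCaratheodory hM hf hre hR (mem_ball_zero_iff.2 hzR)
    _ ≤ 2 * M * R / (R - ρ) + M * (R + R) / (R - ρ) := by gcongr
    _ = 4 * R / (R - ρ) * M := by ring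

lemma rpow_one_sub_mul_rpow_le {a b θ θ' : ℝ} (ha : 0 < a) (hab : a ≤ b) (hθ : θ ≤ θ') :
    a ^ (1 - θ) * b ^ θ ≤ a ^ (1 - θ') * b ^ θ' := by
  have hb : 0 < b := ha.trans_le hab
  have hsplit (x : ℝ) : a ^ (1 - x) * b ^ x = a * (b / a) ^ x := by
    rw [Real.rpow_sub ha, Real.rpow_one, Real.div_rpow hb.le ha.le]
    ring
  rw [hsplit, hsplit]
  gcongr
  exact (one_le_div ha).2 hab

lemma norm_le_interp_of_norm_le {f : ℂ → ℂ} {r ρ R a b : ℝ} (hr : 0 < r) (hrρ : r ≤ ρ)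
    (hρR : ρ < R) (hf : DifferentiableOn ℂ f (closedBall 0 R)) (ha : 0 < a) (hab : a ≤ b)
    (hfa : ∀ z : ℂ, ‖z‖ ≤ r → ‖f z‖ ≤ a) (hfb : ∀ z : ℂ, ‖z‖ ≤ R → ‖f z‖ ≤ b)
    {z : ℂ} (hz : ‖z‖ ≤ ρ) :
    ‖f z‖ ≤ a ^ (1 - Real.log (ρ / r) / Real.log (R / r))
      * b ^ (Real.log (ρ / r) / Real.log (R / r)) := by
  have hlog : 0 < Real.log (R / r) := Real.log_pos ((one_lt_div hr).2 (by linarith))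
  obtain hzr | hzr := le_total ‖z‖ r
  · have h := rpow_one_sub_mul_rpow_le ha hab
      (div_nonneg (Real.log_nonneg ((one_le_div hr).2 hrρ)) hlog.le)
    rw [sub_zero, Real.rpow_one, Real.rpow_zero, mul_one] at h
    exact (hfa z hzr).trans h
  have hdiff (s : Set ℝ) (hs : s ⊆ Iic R) : DifferentiableOn ℂ f {w | ‖w‖ ∈ s} :=
    hf.mono fun w hw ↦ mem_closedBall_zero_iff.2 (hs hw)
  refine (norm_le_interp_of_mem_annulus hr (by linarith) (hdiff _ fun x hx ↦ hx.2.le)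
    (hdiff _ fun x hx ↦ hx.2).continuousOn (fun w hw ↦ hfa w hw.le)
    (fun w hw ↦ hfb w hw.le) ⟨hzr, hz.trans hρR.le⟩).trans (rpow_one_sub_mul_rpow_le ha hab ?_)
  gcongr
  exact div_pos (hr.trans_le hzr) hr

-- Borel–Carathéodory bounds `f` by `O(A)` on `‖z‖ ≤ r / 2` and by `O(M)` on a disc of radius
-- between `ρ` and `R`; the three circles theorem interpolates.
lemma exists_norm_le_mul_rpow_of_re_le {r ρ R A : ℝ} (hr : 0 < r) (hrρ : r ≤ ρ) (hρR : ρ < R)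
    (hA : 0 < A) : ∃ θ ∈ Ico (0 : ℝ) 1, ∃ C, ∀ (f : ℂ → ℂ) (M : ℝ), A ≤ M →
      DifferentiableOn ℂ f (ball 0 R) → ‖f 0‖ ≤ A → (∀ z ∈ ball 0 r, (f z).re ≤ A) →
      (∀ z ∈ ball 0 R, (f z).re ≤ M) → ∀ z : ℂ, ‖z‖ ≤ ρ → ‖f z‖ ≤ C * M ^ θ := by
  have hr2 : r / 2 < r := half_lt_self hr
  obtain ⟨R', hρR', hR'R⟩ := exists_between hρR
  have hlog : 0 < Real.log (R' / (r / 2)) :=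
    Real.log_pos ((one_lt_div (by linarith)).2 (by linarith))
  set a := 4 * r / (r - r / 2) * A with ha
  set K := max (4 * R / (R - R')) (4 * r / (r - r / 2))
  have ha0 : 0 < a := mul_pos (div_pos (by linarith) (by linarith)) hA
  have hK0 : 0 < K := (div_pos (by linarith) (by linarith)).trans_le (le_max_right _ _)
  set θ := Real.log (ρ / (r / 2)) / Real.log (R' / (r / 2)) with hθ
  have hθ0 : 0 ≤ θ :=
    div_nonneg (Real.log_nonneg ((one_le_div (by linarith)).2 (by linarith))) hlog.le
  refine ⟨θ, ⟨hθ0, ?_⟩, a ^ (1 - θ) * K ^ θ, fun f M hAM hf hf0 hfA hfM z hz ↦ ?_⟩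
  · rw [hθ, div_lt_one hlog]
    exact Real.log_lt_log (div_pos (by linarith) (by linarith)) (by gcongr)
  have hM : 0 < M := hA.trans_le hAM
  have haKM : a ≤ K * M := by
    rw [ha]
    gcongr
    exact le_max_right _ _
  rw [mul_assoc, ← Real.mul_rpow hK0.le hM.le]
  exact norm_le_interp_of_norm_le (half_pos hr) (by linarith) hρR'
    (hf.mono (closedBall_subset_ball hR'R)) ha0 haKM
    (fun w hw ↦ norm_le_mul_of_re_le hr2 hA (hf.mono (ball_subset_ball (by linarith))) hf0 hfA hw)
    (fun w hw ↦ (norm_le_mul_of_re_le hR'R hM hf (hf0.trans hAM) hfM hw).trans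
      (mul_le_mul_of_nonneg_right (le_max_left _ _) hM.le)) hz

lemma exists_mul_rpow_le_add_mul {θ ε : ℝ} (hθ : θ ∈ Ico (0 : ℝ) 1) (hε : 0 < ε) (K : ℝ) :
    ∃ C, ∀ x : ℝ, 0 ≤ x → K * x ^ θ ≤ C + ε * x := by
  have hlim : Tendsto (fun x : ℝ ↦ |K| * x ^ (-(1 - θ))) atTop (𝓝 0) := by
    simpa using (tendsto_rpow_neg_atTop (sub_pos.2 hθ.2)).const_mul |K|
  obtain ⟨x₀, hx₀⟩ := eventually_atTop.1 ((hlim.eventually_le_const hε).and (eventually_gt_atTop 0))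
  have hx₀pos : 0 < x₀ := (hx₀ x₀ le_rfl).2
  refine ⟨|K| * x₀ ^ θ, fun x hx ↦ ?_⟩
  obtain hle | hle := le_total x x₀
  · calc K * x ^ θ ≤ |K| * x₀ ^ θ := by
          gcongr
          · exact le_abs_self K
          · exact hθ.1
      _ ≤ |K| * x₀ ^ θ + ε * x := le_add_of_nonneg_right (by positivity)
  · have hxpos : 0 < x := hx₀pos.trans_le hle
    calc K * x ^ θ ≤ |K| * x ^ θ := by
          gcongr
          exact le_abs_self K
      _ = |K| * x ^ (-(1 - θ)) * x := by
          rw [mul_assoc, ← Real.rpow_add_one hxpos.ne', neg_sub, sub_add_cancel]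
      _ ≤ ε * x := mul_le_mul_of_nonneg_right (hx₀ x hle).1 hx
      _ ≤ |K| * x₀ ^ θ + ε * x := le_add_of_nonneg_left (by positivity)

lemma exists_norm_inv_le_exp {r ρ R A ε : ℝ} (hr : 0 < r) (hrρ : r ≤ ρ) (hρR : ρ < R)
    (hA : 0 < A) (hε : 0 < ε) :
    ∃ C, ∀ (c : ℂ) (F : ℂ → ℂ) (M : ℝ), A ≤ M → DifferentiableOn ℂ F (ball c R) →
      (∀ z ∈ ball c R, F z ≠ 0) → ‖log (F c)‖ ≤ A → (∀ z ∈ ball c r, ‖F z‖ ≤ Real.exp A) →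
      (∀ z ∈ ball c R, ‖F z‖ ≤ Real.exp M) →
      ∀ z ∈ closedBall c ρ, ‖(F z)⁻¹‖ ≤ Real.exp (C + ε * M) := by
  obtain ⟨θ, hθ, K, hK⟩ := exists_norm_le_mul_rpow_of_re_le hr hrρ hρR hA
  obtain ⟨C, hC⟩ := exists_mul_rpow_le_add_mul hθ hε K
  refine ⟨C, fun c F M hAM hF h0 hFc hFA hFM z hz ↦ ?_⟩
  have hR : 0 < R := by linarith
  have hsc : IsSimplyConnected (ball c R) :=
    have := (convex_ball c R).contractibleSpace (nonempty_ball.2 hR)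
    SimplyConnectedSpace.ofContractible _
  obtain ⟨f, hf, hfc, hfexp⟩ :=
    exists_differentiableOn_log isOpen_ball hsc hF h0 (mem_ball_self hR)
  have hshift {x : ℝ} {w : ℂ} (hw : w ∈ ball 0 x) : c + w ∈ ball c x := by
    simpa using hw
  have hre {w : ℂ} {B : ℝ} (hw : w ∈ ball 0 R) (hB : ‖F (c + w)‖ ≤ Real.exp B) :
      (f (c + w)).re ≤ B := by
    rwa [← hfexp _ (hshift hw), norm_exp, Real.exp_le_exp] at hB
  have hz' : ‖z - c‖ ≤ ρ := mem_closedBall_iff_norm.1 hz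
  have hfz : ‖f z‖ ≤ K * M ^ θ := by
    have h := hK (fun w ↦ f (c + w)) M hAM
      (hf.comp (by fun_prop) fun w hw ↦ hshift hw) (by simpa [hfc] using hFc)
      (fun w hw ↦ hre (ball_subset_ball (by linarith) hw) (hFA _ (hshift hw)))
      (fun w hw ↦ hre hw (hFM _ (hshift hw))) (z - c) hz'
    simpa using h
  rw [← hfexp z (mem_ball_iff_norm.2 (hz'.trans_lt hρR)), ← exp_neg, norm_exp, Real.exp_le_exp]
  calc (-f z).re ≤ ‖-f z‖ := re_le_norm _
    _ = ‖f z‖ := norm_neg _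
    _ ≤ K * M ^ θ := hfz
    _ ≤ C + ε * M := hC M (hA.le.trans hAM)

end ComplexAnalysis

section InverseZeta

open Complex Metric Set

lemma norm_LSeries_le_tsum_norm_term_one {a : ℕ → ℂ} (ha : ∀ n, ‖a n‖ ≤ 1) {x : ℝ} (hx : 1 < x)
    {s : ℂ} (hs : x ≤ s.re) : ‖LSeries a s‖ ≤ ∑' n, ‖LSeries.term 1 (x : ℂ) n‖ := by
  have hsum : Summable fun n ↦ ‖LSeries.term 1 (x : ℂ) n‖ :=
    (LSeriesSummable_one_iff.2 (by simpa using hx)).norm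
  refine tsum_of_norm_bounded hsum.hasSum fun n ↦ ?_
  exact (LSeries.norm_term_le_of_re_le_re a (by simpa using hs) n).trans
    (LSeries.norm_term_le _ (by simpa using ha n))

lemma norm_moebius_le_one (n : ℕ) : ‖((ArithmeticFunction.moebius n : ℤ) : ℂ)‖ ≤ 1 := by
  rw [norm_intCast]
  exact_mod_cast ArithmeticFunction.abs_moebius_le_one

lemma LSeries_moebius_eq_inv_riemannZeta {s : ℂ} (hs : 1 < s.re) :
    LSeries (fun n ↦ ((ArithmeticFunction.moebius n : ℤ) : ℂ)) s = (riemannZeta s)⁻¹ := by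
  refine eq_inv_of_mul_eq_one_right ?_
  rw [← ArithmeticFunction.LSeries_zeta_eq_riemannZeta hs]
  exact ArithmeticFunction.LSeries_zeta_mul_Lseries_moebius hs

lemma exists_norm_riemannZeta_le_exp {x : ℝ} (hx : 1 < x) :
    ∃ A > 0, ∀ s : ℂ, x ≤ s.re →
      ‖riemannZeta s‖ ≤ Real.exp A ∧ ‖(riemannZeta s)⁻¹‖ ≤ Real.exp A := by
  set S := ∑' n, ‖LSeries.term 1 (x : ℂ) n‖
  have : 0 ≤ S := tsum_nonneg fun n ↦ norm_nonneg _
  have hexp : S ≤ Real.exp (S + 1) := by linarith [Real.add_one_le_exp (S + 1)]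
  refine ⟨S + 1, by positivity, fun s hs ↦ ⟨?_, ?_⟩⟩
  · rw [← LSeries_one_eq_riemannZeta (hx.trans_le hs)]
    exact (norm_LSeries_le_tsum_norm_term_one (by simp) hx hs).trans hexp
  · rw [← LSeries_moebius_eq_inv_riemannZeta (hx.trans_le hs)]
    exact (norm_LSeries_le_tsum_norm_term_one norm_moebius_le_one hx hs).trans hexp

lemma norm_log_le_add_pi {w : ℂ} {A : ℝ} (hw : w ≠ 0) (h : ‖w‖ ≤ Real.exp A)
    (hinv : ‖w⁻¹‖ ≤ Real.exp A) : ‖log w‖ ≤ A + Real.pi := by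
  have hpos : 0 < ‖w‖ := norm_pos_iff.2 hw
  rw [norm_inv, inv_le_comm₀ hpos (Real.exp_pos A), ← Real.exp_neg,
    ← Real.le_log_iff_exp_le hpos] at hinv
  rw [← Real.log_le_iff_le_exp hpos] at h
  refine (norm_le_abs_re_add_abs_im _).trans (add_le_add ?_ ?_)
  · rw [log_re]
    exact abs_le.2 ⟨hinv, h⟩
  · rw [log_im]
    exact abs_arg_le_pi w

lemma re_sub_lt_re_of_mem_ball {z c : ℂ} {x : ℝ} (hz : z ∈ ball c x) : c.re - x < z.re := by
  have h := (abs_re_le_norm (z - c)).trans_lt (mem_ball_iff_norm.1 hz)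
  rw [sub_re, abs_lt] at h
  linarith

lemma one_le_norm_sub_one_of_mem_ball {z c : ℂ} (hc : 3 ≤ |c.im|) (hz : z ∈ ball c 2) :
    1 ≤ ‖z - 1‖ := by
  have hzc : |z.im - c.im| < 2 := (abs_im_le_norm (z - c)).trans_lt (mem_ball_iff_norm.1 hz)
  rw [abs_sub_comm] at hzc
  calc 1 ≤ |z.im| := by linarith [abs_sub_abs_le_abs_sub c.im z.im]
    _ ≤ ‖z - 1‖ := by simpa using abs_im_le_norm (z - 1)

lemma ne_one_of_mem_ball {z c : ℂ} (hc : 3 ≤ |c.im|) (hz : z ∈ ball c 2) : z ≠ 1 :=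
  sub_ne_zero.1 <| norm_pos_iff.1 <| zero_lt_one.trans_le <| one_le_norm_sub_one_of_mem_ball hc hz

variable {σ₀ σ ε : ℝ}

lemma norm_riemannZeta_le_of_mem_ball (h₀ : 0 < σ₀) {z c : ℂ} (hre : c.re = 2)
    (him : 3 ≤ |c.im|) (hz : z ∈ ball c (2 - σ₀)) :
    ‖riemannZeta z‖ ≤ 4 * (1 + 1 / σ₀) * (1 + |c.im|) := by
  have hσz : c.re - (2 - σ₀) < z.re := re_sub_lt_re_of_mem_ball hz
  have hc : ‖c‖ ≤ 2 + |c.im| := by simpa [hre] using norm_le_abs_re_add_abs_im c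
  have hzc : ‖z‖ ≤ 4 * (1 + |c.im|) := by
    linarith [norm_le_norm_add_norm_sub' z c, mem_ball_iff_norm.1 hz, abs_nonneg c.im]
  calc ‖riemannZeta z‖ ≤ (1 + 1 / σ₀) * ‖z‖ := norm_riemannZeta_le h₀ (by linarith)
        (one_le_norm_sub_one_of_mem_ball him (ball_subset_ball (by linarith) hz))
    _ ≤ (1 + 1 / σ₀) * (4 * (1 + |c.im|)) := by gcongr
    _ = 4 * (1 + 1 / σ₀) * (1 + |c.im|) := by ring

-- The case `F = ζ`, `c = 2 + i Im s` of `exists_norm_inv_le_exp`, with `M = log |Im s| + O(1)`.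
lemma exists_norm_inv_riemannZeta_le_of_three_le_abs_im (h₀ : 0 < σ₀) (hσ₀ : σ₀ < σ) (hσ : σ ≤ 1)
    (hzero : ∀ s : ℂ, σ₀ < s.re → riemannZeta s ≠ 0) (hε : 0 < ε) :
    ∃ C, ∀ s : ℂ, σ ≤ s.re → s.re ≤ 2 → 3 ≤ |s.im| →
      ‖(riemannZeta s)⁻¹‖ ≤ C * (1 + |s.im|) ^ ε := by
  obtain ⟨A, hA, hAζ⟩ := exists_norm_riemannZeta_le_exp (show (1 : ℝ) < 3 / 2 by norm_num)
  set A' := A + Real.pi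
  have hAA' : A ≤ A' := le_add_of_nonneg_right Real.pi_pos.le
  have hA' : 0 < A' := hA.trans_le hAA'
  obtain ⟨C, hC⟩ := exists_norm_inv_le_exp (r := 1 / 2) (ρ := 2 - σ) (R := 2 - σ₀)
    one_half_pos (by linarith) (by linarith) hA' hε
  set K := 4 * (1 + 1 / σ₀)
  have hK : 1 ≤ K := by linarith [one_div_pos.2 h₀]
  refine ⟨Real.exp (C + ε * A') * K ^ ε, fun s hs hs2 hs3 ↦ ?_⟩
  obtain ⟨c, hcre, hcim⟩ : ∃ c : ℂ, c.re = 2 ∧ c.im = s.im := ⟨⟨2, s.im⟩, rfl, rfl⟩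
  rw [← hcim] at hs3 ⊢
  set T := 1 + |c.im|
  have : 1 ≤ T := le_add_of_nonneg_right (abs_nonneg _)
  have hre {z : ℂ} {x : ℝ} (hz : z ∈ ball c x) : 2 - x < z.re :=
    hcre ▸ re_sub_lt_re_of_mem_ball hz
  have hsub : ball c (2 - σ₀) ⊆ ball c 2 := ball_subset_ball (by linarith)
  have hcζ := hAζ c (by linarith)
  have hsc : s ∈ closedBall c (2 - σ) := by
    rw [mem_closedBall, dist_of_im_eq hcim.symm, dist_comm, Real.dist_eq, abs_of_nonneg] <;>
      linarith
  have hζM (z : ℂ) (hz : z ∈ ball c (2 - σ₀)) :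
      ‖riemannZeta z‖ ≤ Real.exp (A' + Real.log (K * T)) := by
    rw [Real.exp_add, Real.exp_log (by positivity)]
    exact (norm_riemannZeta_le_of_mem_ball h₀ hcre hs3 hz).trans
      (le_mul_of_one_le_left (by positivity) (Real.one_le_exp hA'.le))
  calc ‖(riemannZeta s)⁻¹‖ ≤ Real.exp (C + ε * (A' + Real.log (K * T))) :=
        hC c riemannZeta _ (le_add_of_nonneg_right (Real.log_nonneg (by nlinarith)))
          (fun z hz ↦ (differentiableAt_riemannZeta
            (ne_one_of_mem_ball hs3 (hsub hz))).differentiableWithinAt)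
          (fun z hz ↦ hzero z (by linarith [hre hz]))
          (norm_log_le_add_pi (hzero c (by linarith)) hcζ.1 hcζ.2)
          (fun z hz ↦ (hAζ z (by linarith [hre hz])).1.trans (Real.exp_le_exp.2 hAA')) hζM s hsc
    _ = Real.exp (C + ε * A') * K ^ ε * T ^ ε := by
        rw [mul_assoc (Real.exp _), ← Real.mul_rpow (by positivity) (by positivity),
          Real.rpow_def_of_pos (by positivity), ← Real.exp_add]
        ring_nf

/-- The holomorphic extension of `1 / ζ` across the pole of `ζ`, with value `0` at `1`
(Mathlib's `riemannZeta 1` is a nonzero junk value). -/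
noncomputable def riemannZetaInv (s : ℂ) : ℂ := (s - 1) / riemannZeta₁ s

lemma riemannZetaInv_of_ne_one {s : ℂ} (hs : s ≠ 1) : riemannZetaInv s = (riemannZeta s)⁻¹ := by
  rw [riemannZetaInv, riemannZeta₁_eq_sub_one_mul hs, div_mul_cancel_left₀ (sub_ne_zero.2 hs)]

lemma differentiableAt_riemannZetaInv {s : ℂ} (hs : riemannZeta s ≠ 0) :
    DifferentiableAt ℂ riemannZetaInv s :=
  (differentiableAt_id.sub_const 1).div (differentiable_riemannZeta₁ s)
    (riemannZeta₁_eq_zero_iff.not.2 hs)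

lemma exists_norm_riemannZetaInv_le (h₀ : 0 < σ₀) (hσ₀ : σ₀ < σ) (hσ : σ ≤ 1)
    (hzero : ∀ s : ℂ, σ₀ < s.re → riemannZeta s ≠ 0) (hε : 0 < ε) :
    ∃ C, ∀ s : ℂ, σ ≤ s.re → s.re ≤ 2 → ‖riemannZetaInv s‖ ≤ C * (1 + |s.im|) ^ ε := by
  obtain ⟨C₁, hC₁⟩ := exists_norm_inv_riemannZeta_le_of_three_le_abs_im h₀ hσ₀ hσ hzero hε
  have hcont : ContinuousOn riemannZetaInv (Icc σ 2 ×ℂ Icc (-3) 3) := fun s hs ↦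
    (differentiableAt_riemannZetaInv
      (hzero s (hσ₀.trans_le (mem_reProdIm.1 hs).1.1))).continuousAt.continuousWithinAt
  obtain ⟨C₂, hC₂⟩ :=
    (isCompact_Icc.reProdIm isCompact_Icc).exists_bound_of_continuousOn hcont
  refine ⟨max |C₁| |C₂|, fun s hs hs2 ↦ ?_⟩
  obtain h3 | h3 := le_total 3 |s.im|
  · have hs1 : s ≠ 1 := by
      rintro rfl
      norm_num at h3
    rw [riemannZetaInv_of_ne_one hs1]
    refine (hC₁ s hs hs2 h3).trans ?_
    gcongr
    exact (le_abs_self _).trans (le_max_left _ _)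
  · calc ‖riemannZetaInv s‖ ≤ C₂ := hC₂ s (mem_reProdIm.2 ⟨⟨hs, hs2⟩, abs_le.1 h3⟩)
      _ ≤ max |C₁| |C₂| := (le_abs_self _).trans (le_max_right _ _)
      _ ≤ max |C₁| |C₂| * (1 + |s.im|) ^ ε := le_mul_of_one_le_right (by positivity)
          (Real.one_le_rpow (le_add_of_nonneg_right (abs_nonneg _)) hε.le)

end InverseZeta

section ContourShift

open Complex Filter MeasureTheory Set Topology

lemma integrable_one_add_abs_rpow_neg {r : ℝ} (hr : 1 < r) :
    Integrable fun y : ℝ ↦ (1 + |y|) ^ (-r) := by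
  simpa only [Real.norm_eq_abs] using
    integrable_one_add_norm (E := ℝ) (μ := volume) (r := r) (by simpa using hr)

variable {E : Type*} [NormedAddCommGroup E] {f : ℂ → E} {a b C r σ : ℝ}

lemma verticalIntegrable_of_norm_le (hr : 1 < r)
    (hf : ∀ s : ℂ, s.re = σ → ContinuousAt f s)
    (hb : ∀ s : ℂ, s.re = σ → ‖f s‖ ≤ C * (1 + |s.im|) ^ (-r)) :
    VerticalIntegrable f σ := by
  have hcont : Continuous fun y : ℝ ↦ f (σ + y * I) := continuous_iff_continuousAt.2 fun y ↦
    ContinuousAt.comp (f := fun y : ℝ ↦ (σ : ℂ) + y * I) (hf _ (by simp)) (by fun_prop)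
  refine ((integrable_one_add_abs_rpow_neg hr).const_mul C).mono' hcont.aestronglyMeasurable
    (.of_forall fun y ↦ ?_)
  simpa using hb (σ + y * I) (by simp)

variable [NormedSpace ℂ E]

lemma norm_integral_vertical_le (hr : 1 < r)
    (hb : ∀ s : ℂ, s.re = σ → ‖f s‖ ≤ C * (1 + |s.im|) ^ (-r)) :
    ‖∫ y : ℝ, f (σ + y * I)‖ ≤ C * ∫ y : ℝ, (1 + |y|) ^ (-r) := by
  rw [← integral_const_mul]
  refine norm_integral_le_of_norm_le ((integrable_one_add_abs_rpow_neg hr).const_mul C)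
    (.of_forall fun y ↦ ?_)
  simpa using hb (σ + y * I) (by simp)

lemma tendsto_integral_horizontal_zero (hab : a ≤ b) (hr : 0 < r)
    (hb : ∀ s : ℂ, s.re ∈ Icc a b → ‖f s‖ ≤ C * (1 + |s.im|) ^ (-r))
    {l : Filter ℝ} {u : ℝ → ℝ} (hu : Tendsto (fun T ↦ |u T|) l atTop) :
    Tendsto (fun T ↦ ∫ x in a..b, f (x + u T * I)) l (𝓝 0) := by
  have hdecay : Tendsto (fun T ↦ C * (1 + |u T|) ^ (-r) * |b - a|) l (𝓝 0) := by
    simpa using (((tendsto_rpow_neg_atTop hr).comp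
      (tendsto_atTop_add_const_left l 1 hu)).const_mul C).mul_const |b - a|
  refine squeeze_zero_norm (fun T ↦ intervalIntegral.norm_integral_le_of_norm_le_const
    fun x hx ↦ ?_) hdecay
  rw [uIoc_of_le hab] at hx
  simpa using hb (x + u T * I) (by simpa using ⟨hx.1.le, hx.2⟩)

lemma integral_vertical_eq_of_norm_le [CompleteSpace E] (hab : a ≤ b) (hr : 1 < r)
    (hf : ∀ s : ℂ, s.re ∈ Icc a b → DifferentiableAt ℂ f s)
    (hb : ∀ s : ℂ, s.re ∈ Icc a b → ‖f s‖ ≤ C * (1 + |s.im|) ^ (-r)) :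
    ∫ y : ℝ, f (a + y * I) = ∫ y : ℝ, f (b + y * I) := by
  have hvert {σ : ℝ} (hσ : σ ∈ Icc a b) :
      Tendsto (fun T : ℝ ↦ ∫ y in -T..T, f (σ + y * I)) atTop (𝓝 (∫ y : ℝ, f (σ + y * I))) :=
    intervalIntegral_tendsto_integral
      (verticalIntegrable_of_norm_le hr (fun s hs ↦ (hf s (hs ▸ hσ)).continuousAt)
        fun s hs ↦ hb s (hs ▸ hσ)) tendsto_neg_atTop_atBot tendsto_id
  have hhor {u : ℝ → ℝ} (hu : Tendsto (fun T ↦ |u T|) atTop atTop) :=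
    tendsto_integral_horizontal_zero hab (zero_lt_one.trans hr) hb hu
  have hrect (T : ℝ) : (∫ x in a..b, f (x + (-T : ℝ) * I)) - (∫ x in a..b, f (x + T * I))
      + I • (∫ y in -T..T, f (b + y * I)) - I • (∫ y in -T..T, f (a + y * I)) = 0 := by
    refine integral_boundary_rect_eq_zero_of_differentiableOn f ⟨a, -T⟩ ⟨b, T⟩ fun s hs ↦ ?_
    have hs := (mem_reProdIm.1 hs).1
    simp only [uIcc_of_le hab] at hs
    exact (hf s hs).differentiableWithinAt
  have hlim := (((hhor (tendsto_abs_atTop_atTop.congr fun T ↦ (abs_neg T).symm)).sub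
    (hhor tendsto_abs_atTop_atTop)).add ((hvert (right_mem_Icc.2 hab)).const_smul I)).sub
    ((hvert (left_mem_Icc.2 hab)).const_smul I)
  have h0 := tendsto_nhds_unique (hlim.congr hrect) tendsto_const_nhds
  rw [sub_zero, zero_add, ← smul_sub, smul_eq_zero_iff_right I_ne_zero, sub_eq_zero] at h0
  exact h0.symm

end ContourShift

section PerronKernel

open Complex Filter MeasureTheory Set Topology

variable {X Y σ θ : ℝ} {s : ℂ}

/-- The Mellin transform of `perronCutoff X`, which replaces the kernel `X ^ s / s` of Perron's
formula and, unlike it, is integrable on vertical lines. -/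
noncomputable def perronKernel (X : ℝ) (s : ℂ) : ℂ :=
  (((X + 1 : ℝ) : ℂ) ^ (s + 1) - (X : ℂ) ^ (s + 1)) / (s * (s + 1))

lemma re_add_one_pos (hs : 0 < s.re) : 0 < (s + 1).re := by
  rw [add_re, one_re]
  positivity

lemma differentiableAt_perronKernel (hX : 0 < X) (hs : 0 < s.re) :
    DifferentiableAt ℂ (perronKernel X) s := by
  have hcpow {a : ℝ} (ha : 0 < a) : DifferentiableAt ℂ (fun s : ℂ ↦ (a : ℂ) ^ (s + 1)) s :=
    (differentiableAt_id.add_const 1).const_cpow (Or.inl (ofReal_ne_zero.2 ha.ne'))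
  exact ((hcpow (by positivity)).sub (hcpow hX)).div (by fun_prop)
    (mul_ne_zero (ne_zero_of_re_pos hs) (ne_zero_of_re_pos (re_add_one_pos hs)))

lemma norm_cpow_sub_cpow_le_two_mul (hX : 0 < X) (hXY : X ≤ Y) (hs : 0 ≤ s.re) :
    ‖(Y : ℂ) ^ s - (X : ℂ) ^ s‖ ≤ 2 * Y ^ s.re := by
  refine (norm_sub_le _ _).trans ?_
  rw [norm_cpow_eq_rpow_re_of_pos (hX.trans_le hXY), norm_cpow_eq_rpow_re_of_pos hX, two_mul]
  gcongr

lemma norm_cpow_sub_cpow_le_mul_sub (hX : 0 < X) (hXY : X ≤ Y) (hs : 0 ≤ s.re) :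
    ‖(Y : ℂ) ^ (s + 1) - (X : ℂ) ^ (s + 1)‖ ≤ ‖s + 1‖ * Y ^ s.re * (Y - X) := by
  have hs1 : s + 1 ≠ 0 := ne_zero_of_re_pos (by rw [add_re, one_re]; positivity)
  refine norm_image_sub_le_of_norm_deriv_le_segment' (f := fun x : ℝ ↦ (x : ℂ) ^ (s + 1))
    (f' := fun x ↦ (s + 1) * (x : ℂ) ^ s) (fun x hx ↦ ?_) (fun x hx ↦ ?_) Y ⟨hXY, le_rfl⟩
  · have h := hasDerivAt_ofReal_cpow_const (hX.trans_le hx.1).ne' hs1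
    rw [add_sub_cancel_right] at h
    exact h.hasDerivWithinAt
  · have hx0 : 0 < x := hX.trans_le hx.1
    rw [norm_mul, norm_cpow_eq_rpow_re_of_pos hx0]
    gcongr
    exact hx.2.le

lemma norm_cpow_sub_cpow_le_mul_rpow (hX : 0 < X) (hθ : θ ∈ Icc (0 : ℝ) 1) (hs : 0 < s.re) :
    ‖((X + 1 : ℝ) : ℂ) ^ (s + 1) - (X : ℂ) ^ (s + 1)‖
      ≤ 2 * (X + 1) ^ (s.re + θ) * ‖s + 1‖ ^ (1 - θ) := by
  set Y := X + 1
  have hXY : X ≤ Y := le_add_of_nonneg_right zero_le_one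
  have hY : 0 < Y := hX.trans_le hXY
  set d := ‖(Y : ℂ) ^ (s + 1) - (X : ℂ) ^ (s + 1)‖
  have htriv : d ≤ 2 * Y ^ (s.re + 1) := by
    simpa using norm_cpow_sub_cpow_le_two_mul hX hXY (re_add_one_pos hs).le
  have hmvt : d ≤ ‖s + 1‖ * Y ^ s.re := by
    have h := norm_cpow_sub_cpow_le_mul_sub hX hXY hs.le
    rwa [add_sub_cancel_left, mul_one] at h
  have h1θ : 0 ≤ 1 - θ := sub_nonneg.2 hθ.2
  calc d = d ^ θ * d ^ (1 - θ) := by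
        rw [← Real.rpow_add_of_nonneg (norm_nonneg _) hθ.1 h1θ, add_sub_cancel, Real.rpow_one]
    _ ≤ (2 * Y ^ (s.re + 1)) ^ θ * (‖s + 1‖ * Y ^ s.re) ^ (1 - θ) := by
        gcongr
        exact hθ.1
    _ = 2 ^ θ * Y ^ (s.re + θ) * ‖s + 1‖ ^ (1 - θ) := by
        rw [Real.mul_rpow zero_le_two (by positivity),
          Real.mul_rpow (norm_nonneg _) (by positivity), ← Real.rpow_mul hY.le,
          ← Real.rpow_mul hY.le, show s.re + θ = (s.re + 1) * θ + s.re * (1 - θ) by ring,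
          Real.rpow_add hY]
        ring
    _ ≤ 2 * Y ^ (s.re + θ) * ‖s + 1‖ ^ (1 - θ) := by
        gcongr
        exact Real.rpow_le_self_of_one_le one_le_two hθ.2

lemma norm_le_norm_add_one (hs : 0 < s.re) : ‖s‖ ≤ ‖s + 1‖ := by
  refine Real.sqrt_le_sqrt ?_
  simp only [normSq_apply, add_re, add_im, one_re, one_im]
  nlinarith

lemma one_add_abs_im_le_mul_norm (hσ : 0 < σ) (hs : σ ≤ s.re) :
    1 + |s.im| ≤ (1 + 1 / σ) * ‖s‖ := by
  have h : 1 ≤ 1 / σ * ‖s‖ := by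
    rw [one_div_mul_eq_div, one_le_div hσ]
    exact hs.trans (re_le_norm s)
  linarith [abs_im_le_norm s]

lemma norm_add_one_rpow_div_le (hθ : θ ∈ Icc (0 : ℝ) 1) (hσ : 0 < σ) (hs : σ ≤ s.re) :
    ‖s + 1‖ ^ (1 - θ) / (‖s‖ * ‖s + 1‖) ≤ (1 + 1 / σ) ^ 2 * (1 + |s.im|) ^ (-(1 + θ)) := by
  have hs0 : 0 < s.re := hσ.trans_le hs
  have hnorm : 0 < ‖s‖ := norm_pos_iff.2 (ne_zero_of_re_pos hs0)
  have hnorm1 : 0 < ‖s + 1‖ := norm_pos_iff.2 (ne_zero_of_re_pos (re_add_one_pos hs0))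
  set K := 1 + 1 / σ
  have hK : 1 ≤ K := le_add_of_nonneg_right (by positivity)
  calc ‖s + 1‖ ^ (1 - θ) / (‖s‖ * ‖s + 1‖) = ‖s‖⁻¹ * ‖s + 1‖ ^ (-θ) := by
        rw [sub_eq_neg_add, Real.rpow_add_one hnorm1.ne']
        field_simp
    _ ≤ ‖s‖⁻¹ * ‖s‖ ^ (-θ) := by
        gcongr ‖s‖⁻¹ * ?_
        exact Real.rpow_le_rpow_of_nonpos hnorm (norm_le_norm_add_one hs0) (neg_nonpos.2 hθ.1)
    _ = ‖s‖ ^ (-(1 + θ)) := by rw [neg_add, Real.rpow_add hnorm, Real.rpow_neg_one]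
    _ ≤ ((1 + |s.im|) / K) ^ (-(1 + θ)) := by
        refine Real.rpow_le_rpow_of_nonpos (by positivity) ?_ (by linarith [hθ.1])
        exact div_le_of_le_mul₀ (by positivity) hnorm.le
          ((one_add_abs_im_le_mul_norm hσ hs).trans_eq (mul_comm _ _))
    _ = K ^ (1 + θ) * (1 + |s.im|) ^ (-(1 + θ)) := by
        rw [Real.div_rpow (by positivity) (by positivity), Real.rpow_neg (by positivity : 0 ≤ K),
          div_inv_eq_mul, mul_comm]
    _ ≤ K ^ 2 * (1 + |s.im|) ^ (-(1 + θ)) := by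
        gcongr
        rw [← Real.rpow_natCast K 2]
        exact Real.rpow_le_rpow_of_exponent_le hK (by push_cast; linarith [hθ.2])

lemma norm_perronKernel_le (hX : 0 < X) (hθ : θ ∈ Icc (0 : ℝ) 1) (hσ : 0 < σ) (hs : σ ≤ s.re) :
    ‖perronKernel X s‖
      ≤ 2 * (1 + 1 / σ) ^ 2 * (X + 1) ^ (s.re + θ) * (1 + |s.im|) ^ (-(1 + θ)) := by
  rw [perronKernel, norm_div, norm_mul]
  calc _ ≤ 2 * (X + 1) ^ (s.re + θ) * ‖s + 1‖ ^ (1 - θ) / (‖s‖ * ‖s + 1‖) := by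
        gcongr
        exact norm_cpow_sub_cpow_le_mul_rpow hX hθ (hσ.trans_le hs)
    _ = 2 * (X + 1) ^ (s.re + θ) * (‖s + 1‖ ^ (1 - θ) / (‖s‖ * ‖s + 1‖)) := mul_div_assoc _ _ _
    _ ≤ 2 * (X + 1) ^ (s.re + θ) * ((1 + 1 / σ) ^ 2 * (1 + |s.im|) ^ (-(1 + θ))) := by
        gcongr
        exact norm_add_one_rpow_div_le hθ hσ hs
    _ = 2 * (1 + 1 / σ) ^ 2 * (X + 1) ^ (s.re + θ) * (1 + |s.im|) ^ (-(1 + θ)) := by ring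

/-- The continuous cutoff equal to `1` on `(-∞, X]`, to `0` on `[X + 1, ∞)`, and linear between. -/
def perronCutoff (X x : ℝ) : ℝ := max (X + 1 - x) 0 - max (X - x) 0

lemma perronCutoff_natCast (N n : ℕ) : perronCutoff N n = if n ≤ N then 1 else 0 := by
  rw [perronCutoff]
  split_ifs with h
  · have h : (n : ℝ) ≤ N := Nat.cast_le.2 h
    rw [max_eq_left (by linarith), max_eq_left (by linarith)]
    ring
  · have h : (N : ℝ) + 1 ≤ n := by exact_mod_cast not_le.1 h
    rw [max_eq_right (by linarith), max_eq_right (by linarith), sub_zero]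

lemma hasMellin_max_one_sub (hs : 0 < s.re) :
    HasMellin (fun x : ℝ ↦ ((max (1 - x) 0 : ℝ) : ℂ)) s (1 / (s * (s + 1))) := by
  have hone := hasMellin_one_Ioc hs
  have hid := hasMellin_cpow_Ioc 1 (s := s) (re_add_one_pos hs)
  have hsub := hasMellin_sub hone.1 hid.1
  have heq : EqOn (fun t : ℝ ↦ (t : ℂ) ^ (s - 1) • ((Ioc (0 : ℝ) 1).indicator (fun _ ↦ (1 : ℂ)) t
      - (Ioc (0 : ℝ) 1).indicator (fun t ↦ (t : ℂ) ^ (1 : ℂ)) t))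
      (fun t : ℝ ↦ (t : ℂ) ^ (s - 1) • ((max (1 - t) 0 : ℝ) : ℂ)) (Ioi 0) := by
    intro t ht
    by_cases h1 : t ≤ 1
    · have hmem : t ∈ Ioc (0 : ℝ) 1 := ⟨ht, h1⟩
      simp [indicator_of_mem hmem, max_eq_left (sub_nonneg.2 h1)]
    · have hmem : t ∉ Ioc (0 : ℝ) 1 := fun h ↦ h1 h.2
      simp [indicator_of_notMem hmem, max_eq_right (sub_nonpos.2 (not_le.1 h1).le)]
  refine ⟨(integrableOn_congr_fun heq measurableSet_Ioi).1 hsub.1, ?_⟩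
  have hs0 := ne_zero_of_re_pos hs
  have hs1 := ne_zero_of_re_pos (re_add_one_pos hs)
  rw [mellin, ← setIntegral_congr_fun measurableSet_Ioi heq]
  refine hsub.2.trans ?_
  rw [hone.2, hid.2]
  field_simp
  ring

lemma hasMellin_max_sub {a : ℝ} (ha : 0 < a) (hs : 0 < s.re) :
    HasMellin (fun x : ℝ ↦ ((max (a - x) 0 : ℝ) : ℂ)) s ((a : ℂ) ^ (s + 1) / (s * (s + 1))) := by
  have hone := hasMellin_max_one_sub hs
  have hscaled := hasMellin_const_smul
    ((MellinConvergent.comp_mul_left (s := s) (inv_pos.2 ha)).2 hone.1) (a : ℂ)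
  rw [mellin_comp_mul_left (fun x : ℝ ↦ ((max (1 - x) 0 : ℝ) : ℂ)) s (inv_pos.2 ha),
    hone.2] at hscaled
  convert hscaled using 1
  · ext x
    rw [smul_eq_mul, ← ofReal_mul, mul_max_of_nonneg _ _ ha.le, mul_zero, mul_sub, mul_one,
      mul_inv_cancel_left₀ ha.ne']
  · rw [cpow_add _ _ (ofReal_ne_zero.2 ha.ne'), cpow_one, ofReal_inv,
      inv_cpow _ _ (by rw [arg_ofReal_of_nonneg ha.le]; exact Real.pi_pos.ne), cpow_neg, inv_inv,
      smul_eq_mul, smul_eq_mul]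
    ring

lemma hasMellin_perronCutoff (hX : 0 < X) (hs : 0 < s.re) :
    HasMellin (fun x ↦ (perronCutoff X x : ℂ)) s (perronKernel X s) := by
  have hY := hasMellin_max_sub (add_pos hX one_pos) hs
  have hX := hasMellin_max_sub hX hs
  have hsub := hasMellin_sub hY.1 hX.1
  rw [hY.2, hX.2, ← sub_div] at hsub
  simpa only [perronCutoff, perronKernel, ofReal_sub] using hsub

end PerronKernel

section PerronFormula

open Complex Filter MeasureTheory Set Topology

variable {X σ : ℝ} {a : ℕ → ℂ}

lemma verticalIntegrable_perronKernel (hX : 0 < X) (hσ : 0 < σ) :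
    VerticalIntegrable (perronKernel X) σ := by
  refine verticalIntegrable_of_norm_le (C := 2 * (1 + 1 / σ) ^ 2 * (X + 1) ^ (σ + 1)) (r := 1 + 1)
    (by norm_num) (fun s hs ↦ (differentiableAt_perronKernel hX (hs ▸ hσ)).continuousAt)
    fun s hs ↦ ?_
  simpa only [hs] using norm_perronKernel_le hX (right_mem_Icc.2 zero_le_one) hσ hs.ge

lemma integral_cpow_neg_mul_perronKernel (hX : 0 < X) (hσ : 0 < σ) {x : ℝ} (hx : 0 < x) :
    ∫ y : ℝ, (x : ℂ) ^ (-(σ + y * I)) * perronKernel X (σ + y * I)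
      = 2 * Real.pi * perronCutoff X x := by
  have hmellin (y : ℝ) : HasMellin (fun x ↦ (perronCutoff X x : ℂ)) (σ + y * I)
      (perronKernel X (σ + y * I)) := hasMellin_perronCutoff hX (by simpa using hσ)
  have hcont : Continuous fun x ↦ (perronCutoff X x : ℂ) := by
    unfold perronCutoff
    fun_prop
  have hinv := mellinInv_mellin_eq σ _ hx
    (hasMellin_perronCutoff hX (s := σ) (by simpa using hσ)).1
    ((verticalIntegrable_perronKernel hX hσ).congr (.of_forall fun y ↦ (hmellin y).2.symm))
    hcont.continuousAt
  simp_rw [mellinInv, (hmellin _).2, smul_eq_mul] at hinv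
  rw [← hinv, real_smul, ← mul_assoc]
  push_cast
  rw [mul_one_div_cancel (by simp [Real.pi_ne_zero]), one_mul]

lemma norm_LSeries_term_eq_of_re_eq (a : ℕ → ℂ) {s t : ℂ} (h : s.re = t.re) (n : ℕ) :
    ‖LSeries.term a s n‖ = ‖LSeries.term a t n‖ := by
  rw [LSeries.norm_term_eq, LSeries.norm_term_eq, h]

lemma continuous_LSeries_term (a : ℕ → ℂ) (n : ℕ) : Continuous fun s ↦ LSeries.term a s n := by
  obtain rfl | hn := eq_or_ne n 0
  · simpa only [LSeries.term_zero] using continuous_const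
  · have hn' : (n : ℂ) ≠ 0 := Nat.cast_ne_zero.2 hn
    simp only [LSeries.term_of_ne_zero hn]
    exact continuous_const.div (continuous_id.const_cpow (Or.inl hn'))
      fun s ↦ by simp [cpow_eq_zero_iff, hn']

lemma integrable_LSeries_term_mul_perronKernel (a : ℕ → ℂ) (n : ℕ) (hX : 0 < X) (hσ : 0 < σ) :
    Integrable fun y : ℝ ↦ LSeries.term a (σ + y * I) n * perronKernel X (σ + y * I) :=
  (verticalIntegrable_perronKernel hX hσ).bdd_mul (c := ‖LSeries.term a σ n‖)
    ((continuous_LSeries_term a n).comp (by fun_prop)).aestronglyMeasurable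
    (.of_forall fun y ↦ (norm_LSeries_term_eq_of_re_eq a (by simp) n).le)

lemma integral_LSeries_term_mul_perronKernel (a : ℕ → ℂ) (n : ℕ) {N : ℕ} (hN : 0 < N)
    (hσ : 0 < σ) :
    ∫ y : ℝ, LSeries.term a (σ + y * I) n * perronKernel N (σ + y * I)
      = if n ∈ Finset.Icc 1 N then 2 * Real.pi * a n else 0 := by
  obtain rfl | hn := Nat.eq_zero_or_pos n
  · simp
  have hterm (s : ℂ) : LSeries.term a s n = a n * ((n : ℝ) : ℂ) ^ (-s) := by
    rw [LSeries.term_of_ne_zero hn.ne', cpow_neg, div_eq_mul_inv, ofReal_natCast]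
  simp_rw [hterm, mul_assoc]
  rw [integral_const_mul, integral_cpow_neg_mul_perronKernel (Nat.cast_pos.2 hN) hσ
    (Nat.cast_pos.2 hn), perronCutoff_natCast]
  simp only [Finset.mem_Icc, Nat.one_le_iff_ne_zero, hn.ne', ne_eq, not_false_eq_true, true_and]
  split_ifs <;> push_cast <;> ring

theorem integral_LSeries_mul_perronKernel (hσ : 0 < σ) (ha : LSeriesSummable a σ) {N : ℕ}
    (hN : 0 < N) :
    ∫ y : ℝ, LSeries a (σ + y * I) * perronKernel N (σ + y * I)
      = 2 * Real.pi * ∑ k ∈ Finset.Icc 1 N, a k := by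
  have hN' : (0 : ℝ) < N := Nat.cast_pos.2 hN
  have hsum : Summable fun n ↦
      ∫ y : ℝ, ‖LSeries.term a (σ + y * I) n * perronKernel N (σ + y * I)‖ := by
    refine (ha.norm.mul_right (∫ y : ℝ, ‖perronKernel N (σ + y * I)‖)).congr fun n ↦ ?_
    have hnorm (y : ℝ) : ‖LSeries.term a (σ + y * I) n‖ = ‖LSeries.term a σ n‖ :=
      norm_LSeries_term_eq_of_re_eq a (by simp) n
    simp_rw [norm_mul, hnorm]
    rw [integral_const_mul]
  have hHasSum := hasSum_integral_of_summable_integral_norm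
    (fun n ↦ integrable_LSeries_term_mul_perronKernel a n hN' hσ) hsum
  simp_rw [integral_LSeries_term_mul_perronKernel a _ hN hσ, tsum_mul_right] at hHasSum
  have hfinite := hasSum_sum_of_ne_finset_zero (L := .unconditional ℕ)
    (f := fun n ↦ if n ∈ Finset.Icc 1 N then 2 * Real.pi * a n else 0) fun n hn ↦ if_neg hn
  rw [Finset.mul_sum]
  exact (hHasSum.unique hfinite).trans (Finset.sum_congr rfl fun n hn ↦ if_pos hn)

end PerronFormula

section PerronBound

open Asymptotics Complex Filter MeasureTheory Set

lemma norm_mul_perronKernel_le {X σ θ ε B : ℝ} {G : ℂ → ℂ} {s : ℂ} (hX : 0 < X) (hσ : 0 < σ)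
    (hs : σ ≤ s.re) (hθ : θ ∈ Icc (0 : ℝ) 1) (hG : ‖G s‖ ≤ B * (1 + |s.im|) ^ ε) :
    ‖G s * perronKernel X s‖
      ≤ 2 * B * (1 + 1 / σ) ^ 2 * (X + 1) ^ (s.re + θ) * (1 + |s.im|) ^ (-(1 + θ - ε)) := by
  have hsplit : (1 + |s.im|) ^ (-(1 + θ - ε)) = (1 + |s.im|) ^ ε * (1 + |s.im|) ^ (-(1 + θ)) := by
    rw [← Real.rpow_add (by positivity)]
    ring_nf
  rw [norm_mul, hsplit]
  calc ‖G s‖ * ‖perronKernel X s‖ ≤ (B * (1 + |s.im|) ^ ε)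
        * (2 * (1 + 1 / σ) ^ 2 * (X + 1) ^ (s.re + θ) * (1 + |s.im|) ^ (-(1 + θ))) :=
        mul_le_mul hG (norm_perronKernel_le hX hθ hσ hs) (norm_nonneg _)
          ((norm_nonneg _).trans hG)
    _ = _ := by ring

lemma isBigO_natCast_add_one_rpow {r : ℝ} (hr : 0 ≤ r) :
    (fun N : ℕ ↦ ((N : ℝ) + 1) ^ r) =O[atTop] fun N : ℕ ↦ (N : ℝ) ^ r := by
  refine .of_bound (2 ^ r) ?_
  filter_upwards [eventually_ge_atTop 1] with N hN
  have hN' : (1 : ℝ) ≤ N := Nat.one_le_cast.2 hN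
  rw [Real.norm_of_nonneg (by positivity), Real.norm_of_nonneg (by positivity),
    ← Real.mul_rpow zero_le_two (by positivity)]
  gcongr
  linarith

variable {a : ℕ → ℂ} {G : ℂ → ℂ} {σ c B ε θ : ℝ}

-- Perron's formula on `Re s = c`, with the contour moved to `Re s = σ`.
lemma integral_mul_perronKernel_eq_sum (hσ : 0 < σ) (hσc : σ ≤ c)
    (ha : LSeriesSummable a c) (hGa : ∀ s : ℂ, s.re = c → G s = LSeries a s)
    (hG : ∀ s : ℂ, s.re ∈ Icc σ c → DifferentiableAt ℂ G s)
    (hB : ∀ s : ℂ, s.re ∈ Icc σ c → ‖G s‖ ≤ B * (1 + |s.im|) ^ ε)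
    (hθ : θ ∈ Icc (0 : ℝ) 1) (hεθ : ε < θ) {N : ℕ} (hN : 0 < N) :
    ∫ y : ℝ, G (σ + y * I) * perronKernel N (σ + y * I)
      = 2 * Real.pi * ∑ k ∈ Finset.Icc 1 N, a k := by
  have hN' : (0 : ℝ) < N := Nat.cast_pos.2 hN
  have hB0 : 0 ≤ B := nonneg_of_mul_nonneg_left
    ((norm_nonneg _).trans (hB σ (by simpa using hσc))) (by positivity)
  rw [← integral_LSeries_mul_perronKernel (hσ.trans_le hσc) ha hN]
  simp_rw [fun y : ℝ ↦ (hGa (c + y * I) (by simp)).symm]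
  refine integral_vertical_eq_of_norm_le (f := fun s ↦ G s * perronKernel N s)
    (C := 2 * B * (1 + 1 / σ) ^ 2 * ((N : ℝ) + 1) ^ (c + θ)) hσc (show 1 < 1 + θ - ε by linarith)
    (fun s hs ↦ (hG s hs).mul (differentiableAt_perronKernel hN' (hσ.trans_le hs.1)))
    fun s hs ↦ (norm_mul_perronKernel_le hN' hσ hs.1 hθ (hB s hs)).trans ?_
  gcongr
  · linarith
  · exact hs.2

theorem isBigO_sum_of_norm_le (hσ : 0 < σ) (hσc : σ ≤ c)
    (ha : LSeriesSummable a c) (hGa : ∀ s : ℂ, s.re = c → G s = LSeries a s)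
    (hG : ∀ s : ℂ, s.re ∈ Icc σ c → DifferentiableAt ℂ G s)
    (hB : ∀ s : ℂ, s.re ∈ Icc σ c → ‖G s‖ ≤ B * (1 + |s.im|) ^ ε)
    (hθ : θ ∈ Icc (0 : ℝ) 1) (hεθ : ε < θ) :
    (fun N : ℕ ↦ ∑ k ∈ Finset.Icc 1 N, a k) =O[atTop] fun N : ℕ ↦ (N : ℝ) ^ (σ + θ) := by
  refine IsBigO.trans (.of_bound
    (2 * B * (1 + 1 / σ) ^ 2 * ∫ y : ℝ, (1 + |y|) ^ (-(1 + θ - ε))) ?_)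
    (isBigO_natCast_add_one_rpow (add_nonneg hσ.le hθ.1))
  filter_upwards [eventually_gt_atTop 0] with N hN
  have hnorm := norm_integral_vertical_le (f := fun s ↦ G s * perronKernel N s) (σ := σ)
    (C := 2 * B * (1 + 1 / σ) ^ 2 * ((N : ℝ) + 1) ^ (σ + θ)) (show 1 < 1 + θ - ε by linarith)
    fun s hs ↦ by
      simpa only [hs] using norm_mul_perronKernel_le (Nat.cast_pos.2 hN) hσ hs.ge hθ
        (hB s (by rw [hs]; exact left_mem_Icc.2 hσc))
  rw [integral_mul_perronKernel_eq_sum hσ hσc ha hGa hG hB hθ hεθ hN, norm_mul] at hnorm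
  have hpi : 1 ≤ ‖(2 * Real.pi : ℂ)‖ := by
    rw [norm_mul, norm_ofNat, norm_real, Real.norm_of_nonneg Real.pi_pos.le]
    linarith [Real.pi_gt_three]
  rw [Real.norm_of_nonneg (by positivity)]
  calc ‖∑ k ∈ Finset.Icc 1 N, a k‖ ≤ ‖(2 * Real.pi : ℂ)‖ * ‖∑ k ∈ Finset.Icc 1 N, a k‖ :=
        le_mul_of_one_le_left (norm_nonneg _) hpi
    _ ≤ 2 * B * (1 + 1 / σ) ^ 2 * ((N : ℝ) + 1) ^ (σ + θ)
        * ∫ y : ℝ, (1 + |y|) ^ (-(1 + θ - ε)) := hnorm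
    _ = _ := by ring

end PerronBound

section MertensBound

open Asymptotics Filter Set

lemma isBigO_det_Cmat_iff {g : ℕ → ℝ} :
    (fun n ↦ ((Cmat n).det : ℝ)) =O[atTop] g ↔ (fun n ↦ (mertens n : ℂ)) =O[atTop] g := by
  have hnorm : ∀ᶠ n : ℕ in atTop, ‖((Cmat n).det : ℝ)‖ = ‖(mertens n : ℂ)‖ := by
    filter_upwards [eventually_ge_atTop 1] with n hn
    obtain ⟨m, rfl⟩ := Nat.exists_eq_add_of_le' hn
    rw [det_Cmat_succ, Complex.norm_intCast, Real.norm_eq_abs]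
  rw [← isBigO_norm_left, isBigO_congr hnorm .rfl, isBigO_norm_left]

lemma mertens_isBigO_of_riemannZeta_ne_zero {σ₀ ε : ℝ} (h₀ : 0 < σ₀) (h₁ : σ₀ < 1)
    (hzero : ∀ s : ℂ, σ₀ < s.re → riemannZeta s ≠ 0) (hε : 0 < ε) :
    (fun n ↦ (mertens n : ℂ)) =O[atTop] fun n : ℕ ↦ (n : ℝ) ^ (σ₀ + ε) := by
  obtain ⟨η, hη, hηε⟩ : ∃ η > 0, 2 * η ≤ min ε (1 - σ₀) :=
    ⟨min ε (1 - σ₀) / 2, half_pos (lt_min hε (sub_pos.2 h₁)), by linarith⟩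
  obtain ⟨hηε, hη1⟩ := le_min_iff.1 hηε
  obtain ⟨B, hB⟩ := exists_norm_riemannZetaInv_le h₀ (σ := σ₀ + η) (by linarith) (by linarith)
    hzero (half_pos hη)
  have hsum := isBigO_sum_of_norm_le (a := fun n ↦ ((ArithmeticFunction.moebius n : ℤ) : ℂ))
    (G := riemannZetaInv) (c := 2) (θ := η) (by linarith) (by linarith)
    (ArithmeticFunction.LSeriesSummable_moebius_iff.2 (by simp)) (fun s hs ↦ ?_)
    (fun s hs ↦ differentiableAt_riemannZetaInv (hzero s (by linarith [hs.1])))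
    (fun s hs ↦ hB s hs.1 hs.2) ⟨hη.le, by linarith⟩ (half_lt_self hη)
  · simp only [mertens, Int.cast_sum]
    refine hsum.trans (.of_bound' ?_)
    filter_upwards [eventually_ge_atTop 1] with n hn
    rw [Real.norm_of_nonneg (by positivity), Real.norm_of_nonneg (by positivity)]
    exact Real.rpow_le_rpow_of_exponent_le (Nat.one_le_cast.2 hn) (by linarith)
  · have hs1 : 1 < s.re := by linarith
    rw [riemannZetaInv_of_ne_one (ne_one_of_one_lt_re hs1), LSeries_moebius_eq_inv_riemannZeta hs1]

theorem riemannHypothesis_iff_det_Cmat_isBigO_general {σ₀ : ℝ} (h₀ : 0 < σ₀) (h₁ : σ₀ < 1) :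
    (∀ s : ℂ, σ₀ < s.re → riemannZeta s ≠ 0) ↔ ∀ ε : ℝ, 0 < ε →
      (fun n : ℕ ↦ ((Cmat n).det : ℝ)) =O[atTop] fun n : ℕ ↦ (n : ℝ) ^ (σ₀ + ε) := by
  simp_rw [isBigO_det_Cmat_iff]
  refine ⟨fun hzero ε hε ↦ mertens_isBigO_of_riemannZeta_ne_zero h₀ h₁ hzero hε, fun hO s hs ↦ ?_⟩
  obtain ⟨r, hr, hrs⟩ := exists_between hs
  have hOr := hO (r - σ₀) (sub_pos.2 hr)
  rw [add_sub_cancel] at hOr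
  exact riemannZeta_ne_zero_of_mertens_isBigO (h₀.trans hr).le hOr hrs

end MertensBound

/-- The Riemann Hypothesis holds if and only if, for every `ε > 0`,
`det C_n = O(n^{1/2 + ε})` as `n → ∞`. -/
theorem riemannHypothesis_iff_det_Cmat_isBigO :
    RiemannHypothesis ↔ ∀ ε : ℝ, 0 < ε →
      (fun n : ℕ => ((Cmat n).det : ℝ)) =O[Filter.atTop]
        (fun n : ℕ => (n : ℝ) ^ ((1 : ℝ) / 2 + ε)) :=
  riemannHypothesis_iff_riemannZeta_ne_zero.trans
    (riemannHypothesis_iff_det_Cmat_isBigO_general one_half_pos one_half_lt_one)
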